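/- Let ℛ = ℂ[z^4, z^6+z^7] + z^{16}ℂ⟦z⟧ with value semigroup Γ = ⟨4,6,13⟩ and gap set G = {1,2,3,5,7,9,11,15}. The admissible D-flags of length 3 are exactly the following three: D_0 = {9,11,15} with (g_1,g_2,g_3) = (2,5,7); D_0 = {7,9,11,15} with (g_1,g_2,g_3) = (2,3,5); and D_0 = {5,7,9,11,15} with (g_1,g_2,g_3) = (1,2,3). Moreover there is no admissible D-flag of length 4. -/

import Mathlib

open PowerSeries

noncomputable section

/-- `𝒪 = ℂ⟦z⟧`, the ring of formal power series over `ℂ`. -/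
abbrev 𝒪 : Type := PowerSeries ℂ

/-- `ν(f)`: the order of a power series (least `n` with nonzero coefficient);
only meaningful for `f ≠ 0`. -/
noncomputable def ord (f : 𝒪) : ℕ := sInf {n : ℕ | PowerSeries.coeff n f ≠ 0}

/-- The value semigroup `Γ = {ν(x) : 0 ≠ x ∈ ℛ}` of a subalgebra `ℛ ⊆ 𝒪`. -/
def SGamma (R : Subalgebra ℂ 𝒪) : Set ℕ := {n | ∃ x ∈ R, x ≠ (0:𝒪) ∧ ord x = n}

/-- The set of gaps `G = ℕ ∖ Γ`. -/
def Gaps (R : Subalgebra ℂ 𝒪) : Set ℕ := (SGamma R)ᶜ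

/-- `Δ` is a `Γ`-module: `Γ + Δ ⊆ Δ`. -/
def IsGammaModule (Γ Δ : Set ℕ) : Prop := ∀ a ∈ Γ, ∀ d ∈ Δ, a + d ∈ Δ

/-- `Δ_𝓜 = {ν(x) : 0 ≠ x ∈ 𝓜}` for an `ℛ`-submodule `𝓜 ⊆ 𝒪`. -/
def DeltaM (R : Subalgebra ℂ 𝒪) (M : Submodule ↥R 𝒪) : Set ℕ :=
  {n | ∃ x ∈ M, x ≠ (0:𝒪) ∧ ord x = n}

/-- `D_𝓜 = Δ_𝓜 ∩ G`, the set of added gaps. -/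
def Dset (R : Subalgebra ℂ 𝒪) (M : Submodule ↥R 𝒪) : Set ℕ := DeltaM R M ∩ Gaps R

/-- A standard module: a finitely generated `ℛ`-submodule of `𝒪` containing an
element of order `0`. -/
def IsStd (R : Subalgebra ℂ 𝒪) (M : Submodule ↥R 𝒪) : Prop :=
  M.FG ∧ ∃ x ∈ M, x ≠ (0:𝒪) ∧ ord x = 0

/-- `c ≥ 1` is the conductor of `ℛ`: the minimal exponent with `z^c𝒪 ⊆ ℛ`. -/
def HasConductor (R : Subalgebra ℂ 𝒪) (c : ℕ) : Prop :=
  1 ≤ c ∧ (∀ f : 𝒪, (PowerSeries.X : 𝒪)^c * f ∈ R) ∧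
    ∀ c' : ℕ, (∀ f : 𝒪, (PowerSeries.X : 𝒪)^c' * f ∈ R) → c ≤ c'

/-- `z^j𝒪` as a `ℂ`-submodule of `𝒪`. -/
def zO (j : ℕ) : Submodule ℂ 𝒪 :=
  LinearMap.range (LinearMap.mulLeft ℂ ((PowerSeries.X : 𝒪)^j))

/-- `𝔪𝓜` as a `ℂ`-submodule of `𝒪`, where `𝔪 = {x ∈ ℛ : x = 0 or ν(x) > 0}`
is the maximal ideal of `ℛ`. -/
def mSmul (R : Subalgebra ℂ 𝒪) (M : Submodule ↥R 𝒪) : Submodule ℂ 𝒪 :=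
  Submodule.span ℂ {z : 𝒪 | ∃ r ∈ (R : Set 𝒪), ∃ y ∈ M, (r = 0 ∨ 0 < ord r) ∧ z = r * y}

/-- `dim_ℂ (A / B)` for `ℂ`-subspaces; intended for `B ≤ A`. -/
noncomputable def quotDim (A B : Submodule ℂ 𝒪) : ℕ :=
  Module.finrank ℂ (↥A ⧸ Submodule.comap A.subtype B)

/-- `D_i = D_0 ∪ {g_1, …, g_i}` (the gaps `g` are indexed by `1, …, m`). -/
def DFlagSet (D0 : Set ℕ) (g : ℕ → ℕ) (i : ℕ) : Set ℕ := D0 ∪ g '' Set.Icc 1 i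

/-- `(D_0, …, D_m)` with `D_i = D_0 ∪ {g_1 < … < g_i}` is a `D`-flag:
all `Δ_i = Γ ∪ D_i` are `Γ`-modules. -/
def IsDFlag (R : Subalgebra ℂ 𝒪) (m : ℕ) (D0 : Set ℕ) (g : ℕ → ℕ) : Prop :=
  D0 ⊆ Gaps R ∧ StrictMonoOn g (Set.Icc 1 m) ∧
  (∀ i, 1 ≤ i → i ≤ m → g i ∈ Gaps R \ D0) ∧
  (∀ i ≤ m, IsGammaModule (SGamma R) (SGamma R ∪ DFlagSet D0 g i))

/-- A `D`-flag is admissible if it is realized by a flag of standard modules. -/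
def IsAdmissibleFlag (R : Subalgebra ℂ 𝒪) (m : ℕ) (D0 : Set ℕ) (g : ℕ → ℕ) : Prop :=
  ∃ MM : ℕ → Submodule ↥R 𝒪, (∀ i, i < m → MM i ≤ MM (i+1)) ∧
    ∀ i ≤ m, IsStd R (MM i) ∧ Dset R (MM i) = DFlagSet D0 g i

/-- The subalgebra `ℂ[z^a, z^b + z^c] + z^N ℂ⟦z⟧` of `𝒪`. -/
def Rring (a b c N : ℕ) : Subalgebra ℂ 𝒪 where
  carrier := {f : 𝒪 | ∃ p ∈ Algebra.adjoin ℂ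
      ({(PowerSeries.X : 𝒪)^a, (PowerSeries.X : 𝒪)^b + (PowerSeries.X : 𝒪)^c} : Set 𝒪),
    ∃ g : 𝒪, f = p + (PowerSeries.X : 𝒪)^N * g}
  mul_mem' := by
    rintro x y ⟨p, hp, gx, rfl⟩ ⟨q, hq, gy, rfl⟩
    exact ⟨p * q, mul_mem hp hq,
      p * gy + gx * q + (PowerSeries.X : 𝒪)^N * (gx * gy), by ring⟩
  one_mem' := ⟨1, one_mem _, 0, by ring⟩
  add_mem' := by
    rintro x y ⟨p, hp, gx, rfl⟩ ⟨q, hq, gy, rfl⟩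
    exact ⟨p + q, add_mem hp hq, gx + gy, by ring⟩
  zero_mem' := ⟨0, zero_mem _, 0, by ring⟩
  algebraMap_mem' := fun r => ⟨algebraMap ℂ 𝒪 r, Subalgebra.algebraMap_mem _ r, 0, by ring⟩

/-- The ring `ℂ⟦z^4, z^{2u}+z^v⟧ = ℂ[z^4, z^{2u}+z^v] + z^{4u+v}ℂ⟦z⟧` for the
plane curve singularity with Puiseux exponents `(4, 2u, v)`. -/
def Rcal (u v : ℕ) : Subalgebra ℂ 𝒪 := Rring 4 (2*u) v (4*u+v)

/-- The gap counting function `γ_Δ(ℓ) = |[ℓ,∞) ∖ Δ|`. -/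
noncomputable def gapCount (Δ : Set ℕ) (ℓ : ℕ) : ℕ := Set.ncard {k : ℕ | ℓ ≤ k ∧ k ∉ Δ}

/-- `n = n(D)`: the smallest odd number in `(Δ ∪ {v}) ∩ [2u, ∞)`. -/
noncomputable def nOdd (u v : ℕ) (Δ : Set ℕ) : ℕ :=
  sInf {k : ℕ | Odd k ∧ 2*u ≤ k ∧ (k ∈ Δ ∨ k = v)}

/-- The dimension change `μ_{D,g}` of Theorem `dimprop` (for the family `(4,2u,v)`),
where `Γ` is the value semigroup. -/
noncomputable def muDim (u v : ℕ) (Γ : Set ℕ) (D : Set ℕ) (gp : ℕ) : ℕ :=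
  let Δ : Set ℕ := Γ ∪ D
  let Δ' : Set ℕ := Δ ∪ {gp}
  let n : ℕ := nOdd u v Δ
  if gp % 4 = 2 then
    (gapCount Δ' gp - gapCount Δ' (gp+4)) - (gapCount Δ' (gp+n) - gapCount Δ' (gp+4+n))
  else gapCount Δ' gp - gapCount Δ' (gp+4)



/-!
The added gaps `g 1, …, g m` of a `D`-flag form an antichain of gaps for the order
`x ≤_Γ y ↔ y - x ∈ Γ`. Two incomparable gaps other than `2` differ by exactly `2`, so such an
antichain has at most three elements. Exactly five antichains have three; being maximal, each
determines `D₀` as the set of gaps strictly above it.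

Two of these five flags have `g 1 = 2` and neither `7` nor `9` in `D₀`. They are not admissible:
from elements of orders `0` and `2` in a module one obtains, by cancelling leading terms, two
elements whose coefficients in degrees `7` and `9` respectively have a nonzero sum.

For the other three, `ℛ` is cut out of `ℂ⟦z⟧` by one linear functional for each gap. Dropping the
functionals indexed by `D` defines a subspace that grows with `D`, and it is a standard module with
added gaps `D` as soon as `Γ ∪ D` is a `Γ`-module and `9, 11 ∈ D`.
-/

lemma ord_eq_of_order_eq {f : 𝒪} {n : ℕ} (h : f.order = n) : ord f = n :=
  IsLeast.csInf_eq ⟨(order_eq_nat.1 h).1,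
    fun k hk => not_lt.1 fun hkn => hk ((order_eq_nat.1 h).2 k hkn)⟩

lemma ne_zero_and_ord_eq_iff {f : 𝒪} {n : ℕ} : f ≠ 0 ∧ ord f = n ↔ f.order = n := by
  refine ⟨?_, fun h => ⟨?_, ord_eq_of_order_eq h⟩⟩
  · rintro ⟨hf, rfl⟩
    have horder : f.order = f.order.toNat := (coe_toNat_order hf).symm
    rwa [ord_eq_of_order_eq horder]
  · rintro rfl
    simp at h

section Subalgebra

variable {R : Subalgebra ℂ 𝒪} {M : Submodule R 𝒪} {n : ℕ}

lemma mem_SGamma : n ∈ SGamma R ↔ ∃ f ∈ R, f.order = n := by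
  simp only [SGamma, Set.mem_ofPred_eq, ne_zero_and_ord_eq_iff]

lemma mem_DeltaM : n ∈ DeltaM R M ↔ ∃ f ∈ M, f.order = n := by
  simp only [DeltaM, Set.mem_ofPred_eq, ne_zero_and_ord_eq_iff]

lemma add_mem_SGamma {k : ℕ} (hn : n ∈ SGamma R) (hk : k ∈ SGamma R) : n + k ∈ SGamma R := by
  obtain ⟨f, hf, hfn⟩ := mem_SGamma.1 hn
  obtain ⟨h, hh, hhk⟩ := mem_SGamma.1 hk
  exact mem_SGamma.2 ⟨f * h, mul_mem hf hh, by rw [order_mul, hfn, hhk, Nat.cast_add]⟩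

lemma mul_mem_submodule {r f : 𝒪} (hr : r ∈ R) (hf : f ∈ M) : r * f ∈ M :=
  M.smul_mem ⟨r, hr⟩ hf

lemma finite_quotient_of_X_pow_mul_mem {N : ℕ} (hN : ∀ f : 𝒪, X ^ N * f ∈ M) :
    Module.Finite ℂ (𝒪 ⧸ M) := by
  let lowCoeffs : 𝒪 →ₗ[ℂ] Fin N → ℂ := LinearMap.pi fun k => coeff (k : ℕ)
  have hker : LinearMap.ker lowCoeffs ≤ LinearMap.ker (M.mkQ.restrictScalars ℂ) := by
    intro f hf
    obtain ⟨h, rfl⟩ : X ^ N ∣ f := X_pow_dvd_iff.2 fun k hk => congrFun hf ⟨k, hk⟩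
    exact (Submodule.Quotient.mk_eq_zero M).2 (hN h)
  have : Module.Finite ℂ (𝒪 ⧸ LinearMap.ker lowCoeffs) :=
    .equiv lowCoeffs.quotKerEquivRange.symm
  refine .of_surjective ((LinearMap.ker lowCoeffs).liftQ _ hker) fun q => ?_
  obtain ⟨f, rfl⟩ := M.mkQ_surjective q
  exact ⟨Submodule.Quotient.mk f, rfl⟩

lemma fg_of_zero_mem_DeltaM {N : ℕ} (hR : ∀ f : 𝒪, X ^ N * f ∈ R) (hM : 0 ∈ DeltaM R M) :
    M.FG := by
  obtain ⟨u, huM, hu⟩ := mem_DeltaM.1 hM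
  have hunit : IsUnit u := by
    rw [isUnit_iff_constantCoeff, isUnit_iff_ne_zero, ← coeff_zero_eq_constantCoeff_apply]
    exact (order_eq_nat.1 hu).1
  have hspan : ∀ f : 𝒪, X ^ N * f ∈ Submodule.span R {u} := by
    intro f
    obtain ⟨h, rfl⟩ := hunit.dvd (a := f)
    rw [mul_comm u, ← mul_assoc]
    exact mul_mem_submodule (hR h) (Submodule.mem_span_singleton_self u)
  have := finite_quotient_of_X_pow_mul_mem hspan
  have : IsNoetherian R (𝒪 ⧸ Submodule.span R {u}) := isNoetherian_of_tower ℂ inferInstance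
  refine Submodule.fg_of_fg_map_of_fg_inf_ker (Submodule.span R {u}).mkQ
    (IsNoetherian.noetherian _) ?_
  rw [Submodule.ker_mkQ, inf_eq_right.2 (by simpa using huM)]
  exact Submodule.fg_span_singleton u

lemma mem_DeltaM_of_coeff {f : 𝒪} (hf : f ∈ M) (hlow : ∀ k < n, coeff k f = 0)
    (hn : coeff n f ≠ 0) : n ∈ DeltaM R M :=
  mem_DeltaM.2 ⟨f, hf, order_eq_nat.2 ⟨hn, hlow⟩⟩

/-
Both combinations below are chosen so that their leading terms cancel. The surviving coefficients,
in degrees 7 and 9, depend on the next coefficients of `f` and `h`, but their sum does not.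
-/
lemma seven_or_nine_mem_DeltaM (hx : (X : 𝒪) ^ 4 ∈ R) (hy : (X : 𝒪) ^ 6 + X ^ 7 ∈ R)
    (h0 : 0 ∈ DeltaM R M) (h2 : 2 ∈ DeltaM R M) : 7 ∈ DeltaM R M ∨ 9 ∈ DeltaM R M := by
  obtain ⟨f, hf, hford⟩ := mem_DeltaM.1 h0
  obtain ⟨h, hh, hhord⟩ := mem_DeltaM.1 h2
  obtain ⟨hf0, -⟩ := order_eq_nat.1 hford
  obtain ⟨hh2, hhlow⟩ := order_eq_nat.1 hhord
  have hh0 : coeff 0 h = 0 := hhlow 0 two_pos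
  have hh1 : coeff 1 h = 0 := hhlow 1 one_lt_two
  set s : 𝒪 := coeff 2 h • ((X ^ 6 + X ^ 7) * f) - coeff 0 f • (X ^ 4 * h)
  set t : 𝒪 := coeff 0 f • ((X ^ 6 + X ^ 7) * h) - coeff 2 h • (X ^ 4 * (X ^ 4 * f))
  have hsM : s ∈ M := sub_mem (M.smul_of_tower_mem _ (mul_mem_submodule hy hf))
    (M.smul_of_tower_mem _ (mul_mem_submodule hx hh))
  have htM : t ∈ M := sub_mem (M.smul_of_tower_mem _ (mul_mem_submodule hy hh))
    (M.smul_of_tower_mem _ (mul_mem_submodule hx (mul_mem_submodule hx hf)))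
  have hslow : ∀ k < 7, coeff k s = 0 := by
    intro k hk
    interval_cases k <;>
      simp [s, add_mul, coeff_X_pow_mul', -coeff_zero_eq_constantCoeff, hh0, hh1,
        mul_comm (coeff 2 h)]
  have htlow : ∀ k < 9, coeff k t = 0 := by
    intro k hk
    interval_cases k <;>
      simp [t, add_mul, coeff_X_pow_mul', -coeff_zero_eq_constantCoeff, hh0, hh1,
        mul_comm (coeff 2 h)]
  have hsum : coeff 7 s + coeff 9 t = 2 * (coeff 0 f * coeff 2 h) := by
    simp only [add_mul, smul_add, map_sub, map_add, map_smul, coeff_X_pow_mul', Nat.reduceLeDiff,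
      ↓reduceIte, Nat.reduceSub, smul_eq_mul, Std.le_refl, tsub_self, s, t]
    ring
  have hne : coeff 7 s + coeff 9 t ≠ 0 :=
    hsum ▸ mul_ne_zero two_ne_zero (mul_ne_zero hf0 hh2)
  rcases eq_or_ne (coeff 7 s) 0 with hs7 | hs7
  · rw [hs7, zero_add] at hne
    exact Or.inr (mem_DeltaM_of_coeff htM htlow hne)
  · exact Or.inl (mem_DeltaM_of_coeff hsM hslow hs7)

end Subalgebra

section Flags

variable {R : Subalgebra ℂ 𝒪} {m i j n : ℕ} {D₀ : Set ℕ} {g : ℕ → ℕ}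

/-- The partial order `x ≤_Γ y` on `ℕ`. -/
def GammaLE (Γ : Set ℕ) (x y : ℕ) : Prop := ∃ a ∈ Γ, a + x = y

lemma gammaLE_iff {Γ : Set ℕ} {x y : ℕ} : GammaLE Γ x y ↔ x ≤ y ∧ y - x ∈ Γ := by
  constructor
  · rintro ⟨a, ha, rfl⟩
    exact ⟨Nat.le_add_left x a, by rwa [Nat.add_sub_cancel]⟩
  · rintro ⟨hxy, hsub⟩
    exact ⟨y - x, hsub, Nat.sub_add_cancel hxy⟩

lemma GammaLE.le {Γ : Set ℕ} {x y : ℕ} (h : GammaLE Γ x y) : x ≤ y := (gammaLE_iff.1 h).1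

lemma GammaLE.trans {x y z : ℕ} (hxy : GammaLE (SGamma R) x y) (hyz : GammaLE (SGamma R) y z) :
    GammaLE (SGamma R) x z := by
  obtain ⟨a, ha, rfl⟩ := hxy
  obtain ⟨b, hb, rfl⟩ := hyz
  exact ⟨b + a, add_mem_SGamma hb ha, add_assoc b a x⟩

lemma IsGammaModule.mem_of_gammaLE {Γ D : Set ℕ} (hD : IsGammaModule Γ (Γ ∪ D)) {d : ℕ}
    (hd : d ∈ D) (hdn : GammaLE Γ d n) (hn : n ∉ Γ) : n ∈ D := by
  obtain ⟨a, ha, rfl⟩ := hdn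
  exact (hD a ha d (Or.inr hd)).resolve_left hn

lemma isGammaModule_SGamma_union {D : Set ℕ}
    (hD : ∀ d ∈ D, ∀ n ∈ Gaps R, GammaLE (SGamma R) d n → n ∈ D) :
    IsGammaModule (SGamma R) (SGamma R ∪ D) := by
  rintro a ha d (hd | hd)
  · exact Or.inl (add_mem_SGamma ha hd)
  · exact or_iff_not_imp_left.2 fun hgap => hD d hd _ hgap ⟨a, ha, rfl⟩

lemma mem_DFlagSet_self (hi : 1 ≤ i) : g i ∈ DFlagSet D₀ g i :=
  Or.inr ⟨i, ⟨hi, le_rfl⟩, rfl⟩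

lemma DFlagSet_zero : DFlagSet D₀ g 0 = D₀ := by simp [DFlagSet]

lemma DFlagSet_mono (hij : i ≤ j) : DFlagSet D₀ g i ⊆ DFlagSet D₀ g j :=
  Set.union_subset_union_right _ (Set.image_mono (Set.Icc_subset_Icc_right hij))

/-- The gaps of `R` strictly above some element of `S` in the order `≤_Γ`. When the added gaps
`g 1, …, g m` of a `D`-flag form `S`, these gaps are forced into `D₀`. -/
def gapsAbove (R : Subalgebra ℂ 𝒪) (S : Set ℕ) : Set ℕ :=
  {d | d ∈ Gaps R ∧ ∃ s ∈ S, GammaLE (SGamma R) s d ∧ d ≠ s}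

lemma isDFlag_gapsAbove (hg : StrictMonoOn g (Set.Icc 1 m)) (hgap : g '' Set.Icc 1 m ⊆ Gaps R)
    (hanti : IsAntichain (GammaLE (SGamma R)) (g '' Set.Icc 1 m)) :
    IsDFlag R m (gapsAbove R (g '' Set.Icc 1 m)) g := by
  refine ⟨fun d hd => hd.1, hg, fun i h1 him => ?_,
    fun i him => isGammaModule_SGamma_union fun d hd n hn hdn => ?_⟩
  · have hi : g i ∈ g '' Set.Icc 1 m := ⟨i, ⟨h1, him⟩, rfl⟩
    refine ⟨hgap hi, ?_⟩
    rintro ⟨-, s, hs, hle, hne⟩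
    exact hanti hs hi hne.symm hle
  · obtain rfl | hnd := eq_or_ne n d
    · exact hd
    rcases hd with ⟨-, s, hs, hsd, -⟩ | ⟨j, hj, rfl⟩
    · have hlt : s < n := hsd.le.trans_lt (hdn.le.lt_of_ne hnd.symm)
      exact Or.inl ⟨hn, s, hs, hsd.trans hdn, hlt.ne'⟩
    · exact Or.inl ⟨hn, g j, ⟨j, ⟨hj.1, hj.2.trans him⟩, rfl⟩, hdn, hnd⟩

namespace IsDFlag

lemma image_subset_Gaps (h : IsDFlag R m D₀ g) : g '' Set.Icc 1 m ⊆ Gaps R := by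
  rintro _ ⟨i, hi, rfl⟩
  exact (h.2.2.1 i hi.1 hi.2).1

lemma card_image (h : IsDFlag R m D₀ g) : ((Finset.Icc 1 m).image g).card = m := by
  rw [Finset.card_image_of_injOn (by simpa using h.2.1.injOn), Nat.card_Icc, Nat.add_sub_cancel]

lemma not_mem_of_gammaLE (h : IsDFlag R m D₀ g) (hi : i ∈ Set.Icc 1 m)
    (hn : GammaLE (SGamma R) n (g i)) : n ∉ D₀ := by
  obtain ⟨hgap, hnot⟩ := h.2.2.1 i hi.1 hi.2
  have hΓ := h.2.2.2 0 m.zero_le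
  rw [DFlagSet_zero] at hΓ
  exact fun hnD => hnot (hΓ.mem_of_gammaLE hnD hn hgap)

lemma mem_of_gammaLE (h : IsDFlag R m D₀ g) (hi : i ∈ Set.Icc 1 m)
    (hin : GammaLE (SGamma R) (g i) n) (hgap : n ∈ Gaps R) (hne : n ≠ g i) : n ∈ D₀ := by
  rcases (h.2.2.2 i hi.2).mem_of_gammaLE (mem_DFlagSet_self hi.1) hin hgap
    with hn | ⟨k, ⟨hk, hki⟩, rfl⟩
  · exact hn
  · have hle : g k ≤ g i := h.2.1.monotoneOn ⟨hk, hki.trans hi.2⟩ hi hki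
    exact absurd (hle.antisymm hin.le) hne

lemma isAntichain (h : IsDFlag R m D₀ g) :
    IsAntichain (GammaLE (SGamma R)) (g '' Set.Icc 1 m) := by
  rintro _ ⟨i, hi, rfl⟩ _ ⟨j, hj, rfl⟩ hne hle
  obtain ⟨hgap, hnot⟩ := h.2.2.1 j hj.1 hj.2
  exact hnot (h.mem_of_gammaLE hi hle hgap hne.symm)

lemma gapsAbove_subset (h : IsDFlag R m D₀ g) : gapsAbove R (g '' Set.Icc 1 m) ⊆ D₀ := by
  rintro d ⟨hgap, _, ⟨i, hi, rfl⟩, hle, hne⟩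
  exact h.mem_of_gammaLE hi hle hgap hne

end IsDFlag

end Flags

section Rring

variable {a b c N : ℕ} {V : Submodule ℂ 𝒪}

lemma mul_mem_of_mem_Rring (hx : ∀ f ∈ V, X ^ a * f ∈ V) (hy : ∀ f ∈ V, (X ^ b + X ^ c) * f ∈ V)
    (hN : ∀ f : 𝒪, X ^ N * f ∈ V) {r f : 𝒪} (hr : r ∈ Rring a b c N) (hf : f ∈ V) :
    r * f ∈ V := by
  obtain ⟨p, hp, q, rfl⟩ := hr
  have hpV : ∀ f ∈ V, p * f ∈ V := by
    induction hp using Algebra.adjoin_induction with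
    | mem p hp => rcases hp with rfl | rfl <;> assumption
    | algebraMap z =>
      intro f hf
      rw [← Algebra.smul_def]
      exact V.smul_mem z hf
    | add p q _ _ hp hq =>
      intro f hf
      rw [add_mul]
      exact V.add_mem (hp f hf) (hq f hf)
    | mul p q _ _ hp hq =>
      intro f hf
      rw [mul_assoc]
      exact hp _ (hq f hf)
  rw [add_mul, mul_assoc]
  exact V.add_mem (hpV f hf) (hN _)

lemma mem_span_Rring_iff (hx : ∀ f ∈ V, X ^ a * f ∈ V)
    (hy : ∀ f ∈ V, (X ^ b + X ^ c) * f ∈ V) (hN : ∀ f : 𝒪, X ^ N * f ∈ V) {f : 𝒪} :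
    f ∈ Submodule.span (Rring a b c N) (V : Set 𝒪) ↔ f ∈ V := by
  refine ⟨fun hf => ?_, fun hf => Submodule.subset_span hf⟩
  induction hf using Submodule.span_induction with
  | mem _ hf => exact hf
  | zero => exact V.zero_mem
  | add _ _ _ _ hf hh => exact V.add_mem hf hh
  | smul r _ _ hf => exact mul_mem_of_mem_Rring hx hy hN r.2 hf

lemma X_pow_mem_Rring : (X : 𝒪) ^ a ∈ Rring a b c N :=
  ⟨X ^ a, Algebra.subset_adjoin (Or.inl rfl), 0, by ring⟩

lemma X_pow_add_X_pow_mem_Rring : (X : 𝒪) ^ b + X ^ c ∈ Rring a b c N :=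
  ⟨X ^ b + X ^ c, Algebra.subset_adjoin (Or.inr rfl), 0, by ring⟩

lemma X_pow_mul_mem_Rring (f : 𝒪) : X ^ N * f ∈ Rring a b c N :=
  ⟨0, zero_mem _, f, by ring⟩

end Rring

/-- The ring `ℛ = ℂ[z ^ 4, z ^ 6 + z ^ 7] + z ^ 16 ℂ⟦z⟧`. -/
abbrev ℛ : Subalgebra ℂ 𝒪 := Rring 4 6 7 16

/-- The gap set `G` of `ℛ`, written out; see `Gaps_ℛ`. -/
def gapSet : Set ℕ := {1, 2, 3, 5, 7, 9, 11, 15}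

/-- Functionals on `𝒪` indexed by the gaps of `ℛ` whose common kernel is `ℛ`. Each one is a
coefficient plus a correction by coefficients of lower degree; it is defined as the plain
coefficient for indices where no correction is needed. -/
def gapFunctional (n : ℕ) : 𝒪 →ₗ[ℂ] ℂ :=
  if n = 3 then coeff 3 - coeff 2
  else if n = 7 then coeff 7 - coeff 6
  else if n = 11 then coeff 11 - coeff 10
  else if n = 15 then coeff 15 - coeff 14 + (1 / 2 : ℂ) • coeff 13
  else coeff n

/-- The series on which `gapFunctional k`, for `k` in `gapSet` outside `D`, vanishes. For suitable
`D` this is a standard module with added gaps `D`. -/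
def gapSpace (D : Set ℕ) : Submodule ℂ 𝒪 :=
  ⨅ k ∈ gapSet \ D, LinearMap.ker (gapFunctional k)

/-- The closure conditions on a set of gaps making `gapSpace` stable under `ℛ`. The first two
say that `Γ ∪ D` is closed under adding `4` and `6`; the last one reflects that the functionals
at `9` and `11` of `(z ^ 6 + z ^ 7) * f` involve `coeff 2 f`. -/
structure IsStableGapSet (D : Set ℕ) : Prop where
  subset : D ⊆ gapSet
  add_four : ∀ d ∈ D, d + 4 ∈ gapSet → d + 4 ∈ D
  add_six : ∀ d ∈ D, d + 6 ∈ gapSet → d + 6 ∈ D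
  nine_eleven : 2 ∈ D → 9 ∈ D ∧ 11 ∈ D

section GapSpace

variable {D : Set ℕ} {f : 𝒪} {n : ℕ}

lemma mem_gapSet :
    n ∈ gapSet ↔ n = 1 ∨ n = 2 ∨ n = 3 ∨ n = 5 ∨ n = 7 ∨ n = 9 ∨ n = 11 ∨ n = 15 := Iff.rfl

lemma mem_gapSpace : f ∈ gapSpace D ↔ ∀ k ∈ gapSet, k ∉ D → gapFunctional k f = 0 := by
  simp [gapSpace, Submodule.mem_iInf]

lemma gapFunctional_eq_coeff (hf : ∀ j < n, coeff j f = 0) :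
    gapFunctional n f = coeff n f := by
  unfold gapFunctional
  split_ifs <;> simp_all

lemma X_pow_sixteen_mul_mem_gapSpace (f : 𝒪) : X ^ 16 * f ∈ gapSpace D := by
  refine mem_gapSpace.2 fun k hk _ => ?_
  rcases hk with rfl | rfl | rfl | rfl | rfl | rfl | rfl | rfl <;>
    simp [gapFunctional, coeff_X_pow_mul']

lemma one_mem_gapSpace : 1 ∈ gapSpace D := by
  refine mem_gapSpace.2 fun k hk _ => ?_
  rcases hk with rfl | rfl | rfl | rfl | rfl | rfl | rfl | rfl <;>
    simp [gapFunctional, coeff_one]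

lemma gapFunctional_fifteen_X_pow_four_mul (f : 𝒪) :
    gapFunctional 15 (X ^ 4 * f) = gapFunctional 11 f + 1 / 2 * gapFunctional 9 f := by
  simp [gapFunctional, coeff_X_pow_mul']

lemma gapFunctional_seven_X_pow_six_add_X_pow_seven_mul (f : 𝒪) :
    gapFunctional 7 ((X ^ 6 + X ^ 7) * f) = gapFunctional 1 f := by
  simp [gapFunctional, add_mul, coeff_X_pow_mul']

lemma gapFunctional_nine_X_pow_six_add_X_pow_seven_mul (f : 𝒪) :
    gapFunctional 9 ((X ^ 6 + X ^ 7) * f) = gapFunctional 3 f + 2 * gapFunctional 2 f := by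
  simp only [gapFunctional, Nat.reduceEqDiff, ↓reduceIte, add_mul, map_add, coeff_X_pow_mul',
    Nat.reduceLeDiff, Nat.reduceSub, LinearMap.sub_apply]
  ring

lemma gapFunctional_eleven_X_pow_six_add_X_pow_seven_mul (f : 𝒪) :
    gapFunctional 11 ((X ^ 6 + X ^ 7) * f) =
      gapFunctional 5 f - gapFunctional 3 f - gapFunctional 2 f := by
  simp only [gapFunctional, Nat.reduceEqDiff, ↓reduceIte, add_mul, LinearMap.sub_apply, map_add,
    coeff_X_pow_mul', Nat.reduceLeDiff, Nat.reduceSub]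
  ring

lemma gapFunctional_fifteen_X_pow_six_add_X_pow_seven_mul (f : 𝒪) :
    gapFunctional 15 ((X ^ 6 + X ^ 7) * f) = gapFunctional 9 f - 1 / 2 * gapFunctional 7 f := by
  simp only [gapFunctional, Nat.reduceEqDiff, ↓reduceIte, add_mul, LinearMap.add_apply,
    LinearMap.sub_apply, map_add, coeff_X_pow_mul', Nat.reduceLeDiff, Nat.reduceSub,
    LinearMap.smul_apply, smul_eq_mul]
  ring

namespace IsStableGapSet

lemma X_pow_four_mul_mem (hD : IsStableGapSet D) (hf : f ∈ gapSpace D) :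
    X ^ 4 * f ∈ gapSpace D := by
  rw [mem_gapSpace] at hf ⊢
  have hvanish (k : ℕ) (hk : k ∈ gapSet ∧ k + 4 ∈ gapSet) (hkD : k + 4 ∉ D) :
      gapFunctional k f = 0 := hf k hk.1 fun h => hkD (hD.add_four k h hk.2)
  rintro k (rfl | rfl | rfl | rfl | rfl | rfl | rfl | rfl) hkD
  iterate 3 simp [gapFunctional, coeff_X_pow_mul']
  · simpa [gapFunctional, coeff_X_pow_mul'] using hvanish 1 (by simp [mem_gapSet]) hkD
  · simpa [gapFunctional, coeff_X_pow_mul'] using hvanish 3 (by simp [mem_gapSet]) hkD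
  · simpa [gapFunctional, coeff_X_pow_mul'] using hvanish 5 (by simp [mem_gapSet]) hkD
  · simpa [gapFunctional, coeff_X_pow_mul'] using hvanish 7 (by simp [mem_gapSet]) hkD
  · have h9 := hf 9 (by simp [mem_gapSet]) fun h => hkD (hD.add_six 9 h (by simp [mem_gapSet]))
    have h11 := hvanish 11 (by simp [mem_gapSet]) hkD
    simp [gapFunctional_fifteen_X_pow_four_mul, h9, h11]

lemma X_pow_six_add_X_pow_seven_mul_mem (hD : IsStableGapSet D) (hf : f ∈ gapSpace D) :
    (X ^ 6 + X ^ 7) * f ∈ gapSpace D := by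
  rw [mem_gapSpace] at hf ⊢
  have hnotMem (k : ℕ) (hk : k + 4 ∈ gapSet) (hkD : k + 4 ∉ D) : k ∉ D :=
    fun h => hkD (hD.add_four k h hk)
  have hvanish (k : ℕ) (hk : k ∈ gapSet ∧ k + 6 ∈ gapSet) (hkD : k + 6 ∉ D) :
      gapFunctional k f = 0 := hf k hk.1 fun h => hkD (hD.add_six k h hk.2)
  rintro k (rfl | rfl | rfl | rfl | rfl | rfl | rfl | rfl) hkD
  iterate 4 simp [gapFunctional, add_mul, coeff_X_pow_mul']
  · rw [gapFunctional_seven_X_pow_six_add_X_pow_seven_mul]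
    exact hvanish 1 (by simp [mem_gapSet]) hkD
  · have h2 := hf 2 (by simp [mem_gapSet]) fun h => hkD (hD.nine_eleven h).1
    have h3 := hvanish 3 (by simp [mem_gapSet]) hkD
    simp [gapFunctional_nine_X_pow_six_add_X_pow_seven_mul, h2, h3]
  · have h7D : 7 ∉ D := hnotMem 7 (by simp [mem_gapSet]) hkD
    have h2 := hf 2 (by simp [mem_gapSet]) fun h => hkD (hD.nine_eleven h).2
    have h3 := hf 3 (by simp [mem_gapSet]) (hnotMem 3 (by simp [mem_gapSet]) h7D)
    have h5 := hvanish 5 (by simp [mem_gapSet]) hkD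
    simp [gapFunctional_eleven_X_pow_six_add_X_pow_seven_mul, h2, h3, h5]
  · have h11D : 11 ∉ D := hnotMem 11 (by simp [mem_gapSet]) hkD
    have h7 := hf 7 (by simp [mem_gapSet]) (hnotMem 7 (by simp [mem_gapSet]) h11D)
    have h9 := hvanish 9 (by simp [mem_gapSet]) hkD
    simp [gapFunctional_fifteen_X_pow_six_add_X_pow_seven_mul, h7, h9]

lemma mul_mem (hD : IsStableGapSet D) {r : 𝒪} (hr : r ∈ ℛ) (hf : f ∈ gapSpace D) :
    r * f ∈ gapSpace D :=
  mul_mem_of_mem_Rring (fun _ => hD.X_pow_four_mul_mem)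
    (fun _ => hD.X_pow_six_add_X_pow_seven_mul_mem) X_pow_sixteen_mul_mem_gapSpace hr hf

lemma mem_span_iff (hD : IsStableGapSet D) :
    f ∈ Submodule.span ℛ (gapSpace D : Set 𝒪) ↔ f ∈ gapSpace D :=
  mem_span_Rring_iff (fun _ => hD.X_pow_four_mul_mem)
    (fun _ => hD.X_pow_six_add_X_pow_seven_mul_mem) X_pow_sixteen_mul_mem_gapSpace

end IsStableGapSet

lemma isStableGapSet_empty : IsStableGapSet ∅ := by constructor <;> simp

lemma mem_of_order_of_mem_gapSpace (hf : f ∈ gapSpace D) (hn : f.order = n) (hgap : n ∈ gapSet) :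
    n ∈ D := by
  obtain ⟨hne, hlow⟩ := order_eq_nat.1 hn
  by_contra hnD
  exact hne (gapFunctional_eq_coeff hlow ▸ mem_gapSpace.1 hf n hgap hnD)

lemma exists_mem_gapSpace_of_mem (hnD : n ∈ D) (hn : n ∈ gapSet) :
    ∃ f ∈ gapSpace D, f.order = n := by
  obtain rfl | hn2 := eq_or_ne n 2
  · -- `X ^ 3` compensates for the correction term of `gapFunctional 3`.
    refine ⟨X ^ 2 + X ^ 3, mem_gapSpace.2 fun k hk hkD => ?_, order_eq_nat.2 ⟨?_, ?_⟩⟩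
    · rcases hk with rfl | rfl | rfl | rfl | rfl | rfl | rfl | rfl <;>
        simp [gapFunctional, coeff_X_pow, hnD] at hkD ⊢
    · simp [coeff_X_pow]
    · intro k hk
      interval_cases k <;> simp
  · refine ⟨X ^ n, mem_gapSpace.2 fun k hk hkD => ?_, order_X_pow n⟩
    have hkn : k ≠ n := fun h => hkD (h ▸ hnD)
    rcases hk with rfl | rfl | rfl | rfl | rfl | rfl | rfl | rfl <;>
      rcases hn with rfl | rfl | rfl | rfl | rfl | rfl | rfl | rfl <;>
      simp [gapFunctional, coeff_X_pow, coeff_X] at hkn hn2 ⊢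

end GapSpace

section ValueSemigroup

variable {n : ℕ}

lemma thirteen_mem_SGamma_ℛ : 13 ∈ SGamma ℛ := by
  have hx : (X : 𝒪) ^ 4 ∈ ℛ := X_pow_mem_Rring
  have hy : (X : 𝒪) ^ 6 + X ^ 7 ∈ ℛ := X_pow_add_X_pow_mem_Rring
  have hleading : ((X : 𝒪) ^ 6 + X ^ 7) ^ 2 - (X ^ 4) ^ 3 = X ^ 13 * (C 2 + X) := by
    rw [map_ofNat]
    ring
  refine mem_SGamma.2 ⟨_, sub_mem (pow_mem hy 2) (pow_mem hx 3), order_eq_nat.2 ?_⟩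
  rw [hleading]
  constructor
  · simp [coeff_X_pow_mul']
  · intro k hk
    simp [coeff_X_pow_mul', hk]

lemma mem_SGamma_ℛ_of_sixteen_le (hn : 16 ≤ n) : n ∈ SGamma ℛ := by
  refine mem_SGamma.2 ⟨X ^ 16 * X ^ (n - 16), X_pow_mul_mem_Rring _, ?_⟩
  rw [← pow_add, Nat.add_sub_cancel' hn, order_X_pow]

lemma mem_SGamma_ℛ_iff : n ∈ SGamma ℛ ↔ n ∉ gapSet := by
  refine ⟨fun hn hgap => ?_, fun hn => ?_⟩
  · obtain ⟨r, hr, hrn⟩ := mem_SGamma.1 hn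
    have hr' : r ∈ gapSpace ∅ := mul_one r ▸ isStableGapSet_empty.mul_mem hr one_mem_gapSpace
    exact mem_of_order_of_mem_gapSpace hr' hrn hgap
  · have h4 : 4 ∈ SGamma ℛ := mem_SGamma.2 ⟨X ^ 4, X_pow_mem_Rring, order_X_pow 4⟩
    have h6 : 6 ∈ SGamma ℛ := by
      refine mem_SGamma.2 ⟨X ^ 6 + X ^ 7, X_pow_add_X_pow_mem_Rring, order_eq_nat.2
        ⟨by simp [coeff_X_pow], fun k hk => ?_⟩⟩
      simp [coeff_X_pow, hk.ne, (hk.trans (Nat.lt_succ_self 6)).ne]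
    have h8 := add_mem_SGamma h4 h4
    have h10 := add_mem_SGamma h4 h6
    obtain rfl | rfl | rfl | rfl | rfl | rfl | rfl | rfl | hn16 : n = 0 ∨ n = 4 ∨ n = 6 ∨ n = 8 ∨
        n = 10 ∨ n = 12 ∨ n = 13 ∨ n = 14 ∨ 16 ≤ n := by
      rw [mem_gapSet] at hn
      omega
    · exact mem_SGamma.2 ⟨1, one_mem ℛ, order_one⟩
    · exact h4
    · exact h6
    · exact h8
    · exact h10
    · exact add_mem_SGamma h8 h4
    · exact thirteen_mem_SGamma_ℛ
    · exact add_mem_SGamma h8 h6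
    · exact mem_SGamma_ℛ_of_sixteen_le hn16

lemma Gaps_ℛ : Gaps ℛ = gapSet := by
  ext n
  rw [Gaps, Set.mem_compl_iff, mem_SGamma_ℛ_iff, not_not]

lemma gammaLE_ℛ_iff {x y : ℕ} : GammaLE (SGamma ℛ) x y ↔ x ≤ y ∧ y - x ∉ gapSet := by
  rw [gammaLE_iff, mem_SGamma_ℛ_iff]

end ValueSemigroup

section Realization

variable {D : Set ℕ}

lemma zero_mem_DeltaM_span_gapSpace : 0 ∈ DeltaM ℛ (Submodule.span ℛ (gapSpace D : Set 𝒪)) :=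
  mem_DeltaM.2 ⟨1, Submodule.subset_span one_mem_gapSpace, order_one⟩

lemma isStd_span_gapSpace : IsStd ℛ (Submodule.span ℛ (gapSpace D : Set 𝒪)) :=
  ⟨fg_of_zero_mem_DeltaM X_pow_mul_mem_Rring zero_mem_DeltaM_span_gapSpace,
    zero_mem_DeltaM_span_gapSpace⟩

lemma IsStableGapSet.Dset_span_gapSpace (hD : IsStableGapSet D) :
    Dset ℛ (Submodule.span ℛ (gapSpace D : Set 𝒪)) = D := by
  ext n
  rw [Dset, Gaps_ℛ, Set.mem_inter_iff, mem_DeltaM]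
  simp only [hD.mem_span_iff]
  constructor
  · rintro ⟨⟨f, hf, hn⟩, hgap⟩
    exact mem_of_order_of_mem_gapSpace hf hn hgap
  · exact fun hn => ⟨exists_mem_gapSpace_of_mem hn (hD.subset hn), hD.subset hn⟩

lemma gapSpace_mono {E : Set ℕ} (h : D ⊆ E) : gapSpace D ≤ gapSpace E :=
  biInf_mono fun _ hk => ⟨hk.1, fun hkD => hk.2 (h hkD)⟩

lemma IsGammaModule.isStableGapSet (hD : D ⊆ gapSet)
    (hΓ : IsGammaModule (SGamma ℛ) (SGamma ℛ ∪ D))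
    (h2 : 2 ∈ D → 9 ∈ D ∧ 11 ∈ D) : IsStableGapSet D where
  subset := hD
  add_four d hd hgap := hΓ.mem_of_gammaLE hd (by simp [gammaLE_ℛ_iff, mem_gapSet])
    (by simpa [mem_SGamma_ℛ_iff])
  add_six d hd hgap := hΓ.mem_of_gammaLE hd (by simp [gammaLE_ℛ_iff, mem_gapSet])
    (by simpa [mem_SGamma_ℛ_iff])
  nine_eleven := h2

theorem IsDFlag.isAdmissibleFlag {m : ℕ} {D₀ : Set ℕ} {g : ℕ → ℕ} (h : IsDFlag ℛ m D₀ g)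
    (h9 : 9 ∈ D₀) (h11 : 11 ∈ D₀) : IsAdmissibleFlag ℛ m D₀ g := by
  refine ⟨fun i => Submodule.span ℛ (gapSpace (DFlagSet D₀ g i)),
    fun i _ => Submodule.span_mono (gapSpace_mono (DFlagSet_mono i.le_succ)),
    fun i hi => ⟨isStd_span_gapSpace, ?_⟩⟩
  have hsub : DFlagSet D₀ g i ⊆ gapSet := by
    rw [← Gaps_ℛ]
    rintro _ (hd | ⟨j, hj, rfl⟩)
    · exact h.1 hd
    · exact (h.2.2.1 j hj.1 (hj.2.trans hi)).1
  exact ((h.2.2.2 i hi).isStableGapSet hsub fun _ => ⟨Or.inl h9, Or.inl h11⟩).Dset_span_gapSpace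

end Realization

section Classification

variable {m : ℕ} {D₀ : Set ℕ} {g : ℕ → ℕ}

lemma eq_two_or_eq_add_two_of_not_gammaLE {x y : ℕ} (hx : x ∈ gapSet) (hy : y ∈ gapSet)
    (hxy : x < y) (hle : ¬GammaLE (SGamma ℛ) x y) : x = 2 ∨ y = 2 ∨ y = x + 2 := by
  simp only [gammaLE_ℛ_iff, mem_gapSet] at hx hy hle
  omega

lemma card_le_three_of_isAntichain_gammaLE {s : Finset ℕ} (hs : (s : Set ℕ) ⊆ gapSet)
    (hanti : IsAntichain (GammaLE (SGamma ℛ)) (s : Set ℕ)) : s.card ≤ 3 := by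
  have hdiff : ∀ x ∈ s.erase 2, ∀ y ∈ s.erase 2, x < y → y = x + 2 := by
    intro x hx y hy hxy
    obtain ⟨hx2, hxs⟩ := Finset.mem_erase.1 hx
    obtain ⟨hy2, hys⟩ := Finset.mem_erase.1 hy
    have := eq_two_or_eq_add_two_of_not_gammaLE (hs hxs) (hs hys) hxy (hanti hxs hys hxy.ne)
    tauto
  have herase : (s.erase 2).card ≤ 2 := by
    by_contra! hcard
    obtain ⟨x, hx, y, hy, z, hz, hxy, hxz, hyz⟩ := Finset.two_lt_card.1 hcard
    grind
  have := Finset.pred_card_le_card_erase (s := s) (a := 2)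
  omega

namespace IsDFlag

theorem length_le_three (h : IsDFlag ℛ m D₀ g) : m ≤ 3 := by
  have hcard := card_le_three_of_isAntichain_gammaLE (s := (Finset.Icc 1 m).image g)
    (by simpa [← Gaps_ℛ] using h.image_subset_Gaps) (by simpa using h.isAntichain)
  rwa [h.card_image] at hcard

lemma eq_gapsAbove_of_length_eq_three (h : IsDFlag ℛ 3 D₀ g) :
    D₀ = gapsAbove ℛ (g '' Set.Icc 1 3) := by
  refine h.gapsAbove_subset.antisymm' fun d hd => ⟨h.1 hd, ?_⟩
  by_contra! hnot
  have hne : ∀ i ∈ Set.Icc 1 3, g i ≠ d := fun i hi hid => (h.2.2.1 i hi.1 hi.2).2 (hid ▸ hd)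
  have hanti : IsAntichain (GammaLE (SGamma ℛ)) (insert d (g '' Set.Icc 1 3)) := by
    refine h.isAntichain.insert ?_ ?_
    · rintro _ ⟨i, hi, rfl⟩ - hle
      exact hne i hi (hnot (g i) ⟨i, hi, rfl⟩ hle).symm
    · rintro _ ⟨i, hi, rfl⟩ - hle
      exact h.not_mem_of_gammaLE hi hle hd
  have hcard := card_le_three_of_isAntichain_gammaLE (s := insert d ((Finset.Icc 1 3).image g))
    (by simpa [Set.insert_subset_iff, ← Gaps_ℛ, h.1 hd] using h.image_subset_Gaps)
    (by simpa using hanti)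
  have hnotMem : d ∉ (Finset.Icc 1 3).image g := by
    simpa using fun i h1 h3 => hne i ⟨h1, h3⟩
  rw [Finset.card_insert_of_notMem hnotMem, h.card_image] at hcard
  omega

lemma values_of_length_eq_three (h : IsDFlag ℛ 3 D₀ g) :
    (g 1 = 1 ∧ g 2 = 2 ∧ g 3 = 3) ∨ (g 1 = 2 ∧ g 2 = 3 ∧ g 3 = 5) ∨
      (g 1 = 2 ∧ g 2 = 5 ∧ g 3 = 7) ∨ (g 1 = 2 ∧ g 2 = 7 ∧ g 3 = 9) ∨
      (g 1 = 2 ∧ g 2 = 9 ∧ g 3 = 11) := by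
  have hmem (i : ℕ) (hi : i ∈ Set.Icc 1 3) : g i ∈ gapSet :=
    Gaps_ℛ ▸ h.image_subset_Gaps (Set.mem_image_of_mem g hi)
  have hpair (i j : ℕ) (hi : i ∈ Set.Icc 1 3) (hj : j ∈ Set.Icc 1 3) (hij : i < j) :
      g i < g j ∧ (g i = 2 ∨ g j = 2 ∨ g j = g i + 2) := by
    have hlt := h.2.1 hi hj hij
    exact ⟨hlt, eq_two_or_eq_add_two_of_not_gammaLE (hmem i hi) (hmem j hj) hlt
      (h.isAntichain ⟨i, hi, rfl⟩ ⟨j, hj, rfl⟩ hlt.ne)⟩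
  have h12 := hpair 1 2 (by simp) (by simp) (by simp)
  have h13 := hpair 1 3 (by simp) (by simp) (by simp)
  have h23 := hpair 2 3 (by simp) (by simp) (by simp)
  have hm1 := hmem 1 (by simp)
  have hm2 := hmem 2 (by simp)
  have hm3 := hmem 3 (by simp)
  have htwo : g 1 = 2 ∨ g 2 = 2 := by
    have hpos : 0 < g 1 := by
      rw [mem_gapSet] at hm1
      omega
    omega
  rcases htwo with h1 | h2
  · have h3 : g 3 = g 2 + 2 := by omega
    rw [mem_gapSet] at hm2 hm3
    omega
  · have h1 : g 1 = 1 := by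
      rw [mem_gapSet] at hm1
      omega
    omega

end IsDFlag

lemma image_Icc_one_three : g '' Set.Icc 1 3 = {g 1, g 2, g 3} := by
  have hIcc : Set.Icc 1 3 = ({1, 2, 3} : Set ℕ) := by
    ext
    simp only [Set.mem_Icc, Set.mem_insert_iff, Set.mem_singleton_iff]
    omega
  rw [hIcc, Set.image_insert_eq, Set.image_pair]

lemma isDFlag_three_iff_eq_gapsAbove : IsDFlag ℛ 3 D₀ g ↔ D₀ = gapsAbove ℛ {g 1, g 2, g 3} ∧
    ((g 1 = 1 ∧ g 2 = 2 ∧ g 3 = 3) ∨ (g 1 = 2 ∧ g 2 = 3 ∧ g 3 = 5) ∨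
      (g 1 = 2 ∧ g 2 = 5 ∧ g 3 = 7) ∨ (g 1 = 2 ∧ g 2 = 7 ∧ g 3 = 9) ∨
      (g 1 = 2 ∧ g 2 = 9 ∧ g 3 = 11)) := by
  rw [← image_Icc_one_three]
  refine ⟨fun h => ⟨h.eq_gapsAbove_of_length_eq_three, h.values_of_length_eq_three⟩, ?_⟩
  rintro ⟨rfl, hg⟩
  apply isDFlag_gapsAbove
  · have hstep : g 1 < g 2 ∧ g 2 < g 3 := by omega
    refine strictMonoOn_of_lt_add_one Set.ordConnected_Icc fun i _ hi hi' => ?_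
    obtain rfl | rfl : i = 1 ∨ i = 2 := by grind
    exacts [hstep.1, hstep.2]
  · rw [image_Icc_one_three]
    rcases hg with ⟨h1, h2, h3⟩ | ⟨h1, h2, h3⟩ | ⟨h1, h2, h3⟩ | ⟨h1, h2, h3⟩ | ⟨h1, h2, h3⟩ <;>
      simp [h1, h2, h3, Set.insert_subset_iff, Gaps_ℛ, mem_gapSet]
  · rw [image_Icc_one_three]
    rcases hg with ⟨h1, h2, h3⟩ | ⟨h1, h2, h3⟩ | ⟨h1, h2, h3⟩ | ⟨h1, h2, h3⟩ | ⟨h1, h2, h3⟩ <;>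
      simp [h1, h2, h3, IsAntichain, Set.Pairwise, gammaLE_ℛ_iff, mem_gapSet]

theorem isDFlag_three_iff : IsDFlag ℛ 3 D₀ g ↔
    (D₀ = {5, 7, 9, 11, 15} ∧ g 1 = 1 ∧ g 2 = 2 ∧ g 3 = 3) ∨
    (D₀ = {7, 9, 11, 15} ∧ g 1 = 2 ∧ g 2 = 3 ∧ g 3 = 5) ∨
    (D₀ = {9, 11, 15} ∧ g 1 = 2 ∧ g 2 = 5 ∧ g 3 = 7) ∨
    (D₀ = {11, 15} ∧ g 1 = 2 ∧ g 2 = 7 ∧ g 3 = 9) ∨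
    (D₀ = {15} ∧ g 1 = 2 ∧ g 2 = 9 ∧ g 3 = 11) := by
  rw [isDFlag_three_iff_eq_gapsAbove, and_or_left, and_or_left, and_or_left, and_or_left]
  refine or_congr ?_ (or_congr ?_ (or_congr ?_ (or_congr ?_ ?_))) <;>
  · refine and_congr_left fun ⟨h1, h2, h3⟩ => ?_
    rw [h1, h2, h3]
    refine Eq.congr_right (Set.ext fun d => ?_)
    simp only [gapsAbove, Gaps_ℛ, mem_gapSet, Set.mem_insert_iff, Set.mem_singleton_iff,
      gammaLE_ℛ_iff, not_or, ne_eq, exists_eq_or_imp, ↓existsAndEq, true_and, Set.mem_ofPred_eq]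
    omega

end Classification

section Obstruction

variable {m : ℕ} {D₀ : Set ℕ} {g : ℕ → ℕ}

theorem IsAdmissibleFlag.seven_or_nine_mem (h : IsAdmissibleFlag ℛ m D₀ g) (hm : 1 ≤ m)
    (hg : g 1 = 2) : 7 ∈ D₀ ∨ 9 ∈ D₀ := by
  obtain ⟨MM, -, hMM⟩ := h
  obtain ⟨⟨-, h0⟩, hD⟩ := hMM 1 hm
  have hmem {n : ℕ} (hn : n ∈ gapSet) : n ∈ DeltaM ℛ (MM 1) ↔ n ∈ D₀ ∨ n = 2 := by
    have : n ∈ Dset ℛ (MM 1) ↔ n ∈ D₀ ∨ n = 2 := by simp [hD, DFlagSet, hg, or_comm]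
    rw [← this, Dset, Gaps_ℛ, Set.mem_inter_iff, and_iff_left hn]
  have h2 : 2 ∈ DeltaM ℛ (MM 1) := (hmem (by simp [mem_gapSet])).2 (Or.inr rfl)
  refine (seven_or_nine_mem_DeltaM X_pow_mem_Rring X_pow_add_X_pow_mem_Rring h0 h2).imp ?_ ?_
  · simpa using (hmem (n := 7) (by simp [mem_gapSet])).1
  · simpa using (hmem (n := 9) (by simp [mem_gapSet])).1

end Obstruction

theorem statement18_general :
    (∀ (D0 : Set ℕ) (g : ℕ → ℕ),
      (IsDFlag ℛ 3 D0 g ∧ IsAdmissibleFlag ℛ 3 D0 g) ↔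
        ((D0 = ({9, 11, 15} : Set ℕ) ∧ g 1 = 2 ∧ g 2 = 5 ∧ g 3 = 7) ∨
         (D0 = ({7, 9, 11, 15} : Set ℕ) ∧ g 1 = 2 ∧ g 2 = 3 ∧ g 3 = 5) ∨
         (D0 = ({5, 7, 9, 11, 15} : Set ℕ) ∧ g 1 = 1 ∧ g 2 = 2 ∧ g 3 = 3))) ∧
    ∀ (m : ℕ) (D0 : Set ℕ) (g : ℕ → ℕ), IsDFlag ℛ m D0 g → m ≤ 3 := by
  refine ⟨fun D0 g => ⟨?_, fun h => ?_⟩, fun m D0 g h => h.length_le_three⟩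
  · rintro ⟨hflag, hadm⟩
    have hnot : g 1 = 2 → 7 ∈ D0 ∨ 9 ∈ D0 := hadm.seven_or_nine_mem (by simp)
    rcases isDFlag_three_iff.1 hflag with h | h | h | ⟨rfl, h1, -⟩ | ⟨rfl, h1, -⟩
    · exact Or.inr (Or.inr h)
    · exact Or.inr (Or.inl h)
    · exact Or.inl h
    · exact absurd (hnot h1) (by simp)
    · exact absurd (hnot h1) (by simp)
  · have hflag : IsDFlag ℛ 3 D0 g := isDFlag_three_iff.2 (by tauto)
    have hmem : 9 ∈ D0 ∧ 11 ∈ D0 := by rcases h with ⟨rfl, -⟩ | ⟨rfl, -⟩ | ⟨rfl, -⟩ <;> simp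
    exact ⟨hflag, hflag.isAdmissibleFlag hmem.1 hmem.2⟩

/-- For `ℛ = ℂ[z^4, z^6+z^7] + z^{16}ℂ⟦z⟧`: the admissible `D`-flags of length 3
are exactly `D_0 = {9,11,15}, (g_1,g_2,g_3) = (2,5,7)`;
`D_0 = {7,9,11,15}, (g_1,g_2,g_3) = (2,3,5)`; and
`D_0 = {5,7,9,11,15}, (g_1,g_2,g_3) = (1,2,3)`. Moreover there is no admissible
`D`-flag of length 4. -/
theorem statement18 :
    (∀ (D0 : Set ℕ) (g : ℕ → ℕ),
      (IsDFlag (Rring 4 6 7 16) 3 D0 g ∧ IsAdmissibleFlag (Rring 4 6 7 16) 3 D0 g) ↔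
        ((D0 = ({9, 11, 15} : Set ℕ) ∧ g 1 = 2 ∧ g 2 = 5 ∧ g 3 = 7) ∨
         (D0 = ({7, 9, 11, 15} : Set ℕ) ∧ g 1 = 2 ∧ g 2 = 3 ∧ g 3 = 5) ∨
         (D0 = ({5, 7, 9, 11, 15} : Set ℕ) ∧ g 1 = 1 ∧ g 2 = 2 ∧ g 3 = 3))) ∧
    (∀ (D0 : Set ℕ) (g : ℕ → ℕ),
      ¬ (IsDFlag (Rring 4 6 7 16) 4 D0 g ∧ IsAdmissibleFlag (Rring 4 6 7 16) 4 D0 g)) := by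
  refine ⟨statement18_general.1, fun D0 g h => ?_⟩
  exact absurd (statement18_general.2 4 D0 g h.1) (by simp)

end
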